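/- If H is a 3-uniform hypergraph on n vertices with no isolated vertices, then γ_g(H) ≤ (5/9)·n. -/

import Mathlib

attribute [local instance 10] Classical.propDecidable

variable {V : Type}

/-- The closed neighborhood of a vertex in a hypergraph given by its edge set. -/
noncomputable def closedNbhd [Fintype V] (H : Finset (Finset V)) (v : V) : Finset V :=
  Finset.univ.filter (fun u => u = v ∨ ∃ e ∈ H, u ∈ e ∧ v ∈ e)

private lemma card_sdiff_union_lt [Fintype V] {S T : Finset V} (h : ¬ T ⊆ S) :
    (Finset.univ \ (S ∪ T)).card < (Finset.univ \ S).card := by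
  classical
  obtain ⟨u, huT, huS⟩ := Finset.not_subset.mp h
  apply Finset.card_lt_card
  rw [Finset.ssubset_def]
  constructor
  · exact Finset.sdiff_subset_sdiff (Finset.Subset.refl _) Finset.subset_union_left
  · intro hc
    have hu : u ∈ Finset.univ \ S := by simp [huS]
    have := hc hu
    simp [huT] at this

/-- Value of the domination game on a hypergraph: `S` is the set of vertices already
dominated, `dom = true` iff Dominator is the next player to move.  A legal move is a vertex
dominating at least one new vertex; Dominator minimizes, Staller maximizes the total
number of moves, and both play optimally. -/
noncomputable def domGameVal [Fintype V] (H : Finset (Finset V)) (dom : Bool) (S : Finset V) :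
    ℕ :=
  if h : (Finset.univ.filter fun v => ¬ closedNbhd H v ⊆ S).Nonempty then
    1 + (if dom then
        (Finset.univ.filter fun v => ¬ closedNbhd H v ⊆ S).attach.inf'
          (Finset.attach_nonempty_iff.mpr h)
          (fun v => domGameVal H false (S ∪ closedNbhd H v.1))
      else
        (Finset.univ.filter fun v => ¬ closedNbhd H v ⊆ S).attach.sup'
          (Finset.attach_nonempty_iff.mpr h)
          (fun v => domGameVal H true (S ∪ closedNbhd H v.1)))
  else 0
termination_by (Finset.univ \ S).card
decreasing_by
  · exact card_sdiff_union_lt (Finset.mem_filter.mp v.2).2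
  · exact card_sdiff_union_lt (Finset.mem_filter.mp v.2).2

/-- The game domination number (Dominator starts). -/
noncomputable def gammaGame [Fintype V] (H : Finset (Finset V)) : ℕ :=
  domGameVal H true ∅

/-!
The game is played on the graph joining vertices that lie in a common hyperedge. White (undominated)
vertices weigh 15, dominated vertices with a white neighbor weigh at most 7, the others weigh 0, so
the initial position weighs `15 * n`. Dominator keeps the average decrease of the total weight at
27 or more per move, which gives at most `15 * n / 27 = (5 / 9) * n` moves.

The weight of a dominated vertex is a base plus its number of white neighbors, capped at 7. The
larger the base, the more each reply of Staller removes; the smaller the base, the more vertices are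
below the cap and lose weight when a white neighbor is dominated. Dominator starts with base 6 and
lowers it to 5 when no move is good enough. In the positions where base 5 fails too, the white
vertices induce cycles and isolated vertices and edges; lowering the base to 4 at the vertices
dominating an edge of a cycle then suffices for the rest of the game.
-/

namespace DomGame

/-- The graph joining two distinct vertices whenever some hyperedge contains both; the domination
game on `H` is the domination game on this graph. -/
def adjGraph (H : Finset (Finset V)) : SimpleGraph V where
  Adj u v := u ≠ v ∧ ∃ e ∈ H, u ∈ e ∧ v ∈ e
  symm := ⟨fun _ _ ⟨hne, e, he, hu, hv⟩ => ⟨hne.symm, e, he, hv, hu⟩⟩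
  loopless := ⟨fun _ h => h.1 rfl⟩

/-- Every edge of `G` lies in a triangle. -/
def EdgesInTriangles (G : SimpleGraph V) : Prop :=
  ∀ ⦃u v⦄, G.Adj u v → ∃ w, G.Adj w u ∧ G.Adj w v

lemma edgesInTriangles_adjGraph {H : Finset (Finset V)} (hH : ∀ e ∈ H, 3 ≤ e.card) :
    EdgesInTriangles (adjGraph H) := by
  rintro u v ⟨-, e, he, hu, hv⟩
  obtain ⟨w, hw, hwuv⟩ : ∃ w ∈ e, w ∉ ({u, v} : Finset V) :=
    Finset.exists_mem_notMem_of_card_lt_card (Finset.card_le_two.trans_lt (hH e he))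
  rw [Finset.mem_insert, Finset.mem_singleton, not_or] at hwuv
  exact ⟨w, ⟨hwuv.1, e, he, hw, hu⟩, ⟨hwuv.2, e, he, hw, hv⟩⟩

variable [Fintype V]

/-- The set of dominated vertices after `v` is played in the position with dominated set `S`.
The move is legal iff `S ⊂ play G S v`. -/
noncomputable def play (G : SimpleGraph V) (S : Finset V) (v : V) : Finset V :=
  S ∪ insert v (G.neighborFinset v)

section Play

variable {G : SimpleGraph V} {S : Finset V} {u v : V}

lemma mem_play : u ∈ play G S v ↔ u ∈ S ∨ u = v ∨ G.Adj v u := by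
  simp only [play, Finset.mem_union, Finset.mem_insert, SimpleGraph.mem_neighborFinset]

lemma subset_play : S ⊆ play G S v :=
  Finset.subset_union_left

lemma self_mem_play : v ∈ play G S v :=
  mem_play.2 (.inr (.inl rfl))

lemma mem_play_of_adj (h : G.Adj v u) : u ∈ play G S v :=
  mem_play.2 (.inr (.inr h))

lemma ssubset_play_self (hv : v ∉ S) : S ⊂ play G S v :=
  (Finset.ssubset_iff_of_subset subset_play).2 ⟨v, self_mem_play, hv⟩

lemma ssubset_play_of_adj (hu : u ∉ S) (h : G.Adj v u) : S ⊂ play G S v :=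
  (Finset.ssubset_iff_of_subset subset_play).2 ⟨u, mem_play_of_adj h, hu⟩

lemma exists_adj_of_ssubset_play (h : S ⊂ play G S v) (hv : v ∈ S) : ∃ x ∉ S, G.Adj v x := by
  obtain ⟨x, hx, hxS⟩ := Finset.exists_of_ssubset h
  rcases mem_play.1 hx with hx | rfl | hx
  exacts [absurd hx hxS, absurd hv hxS, ⟨x, hxS, hx⟩]

end Play

section Game

variable {H : Finset (Finset V)} {S : Finset V} {v : V}

lemma union_closedNbhd : S ∪ closedNbhd H v = play (adjGraph H) S v := by
  ext u
  simp only [closedNbhd, mem_play, adjGraph, Finset.mem_union, Finset.mem_filter_univ]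
  grind

lemma not_closedNbhd_subset_iff : ¬ closedNbhd H v ⊆ S ↔ S ⊂ play (adjGraph H) S v := by
  rw [← union_closedNbhd]
  exact left_lt_sup.symm

lemma domGameVal_univ (dom : Bool) : domGameVal H dom Finset.univ = 0 := by
  rw [domGameVal, dif_neg]
  simp

lemma domGameVal_true_le (h : S ⊂ play (adjGraph H) S v) :
    domGameVal H true S ≤ 1 + domGameVal H false (play (adjGraph H) S v) := by
  have hv : v ∈ Finset.univ.filter fun v => ¬ closedNbhd H v ⊆ S := by
    simpa [not_closedNbhd_subset_iff] using h
  rw [domGameVal, dif_pos ⟨v, hv⟩, if_pos rfl, ← union_closedNbhd]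
  exact Nat.add_le_add_left (Finset.inf'_le _ (Finset.mem_attach _ ⟨v, hv⟩)) 1

lemma domGameVal_false_eq (H : Finset (Finset V)) (S : Finset V) :
    domGameVal H false S = 0 ∨ ∃ u, S ⊂ play (adjGraph H) S u ∧
      domGameVal H false S = 1 + domGameVal H true (play (adjGraph H) S u) := by
  rw [domGameVal]
  split_ifs with h hfalse
  · simp at hfalse
  · obtain ⟨u, -, hu⟩ := Finset.exists_mem_eq_sup' (Finset.attach_nonempty_iff.mpr h)
      fun v => domGameVal H true (S ∪ closedNbhd H v.1)
    refine .inr ⟨u, not_closedNbhd_subset_iff.1 (Finset.mem_filter.1 u.2).2, ?_⟩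
    rw [hu, union_closedNbhd]
  · exact .inl rfl

/-- Dominator has a legal move that lowers the potential `Φ` by at least `c`, and by at least
`2 * c` together with any legal reply of Staller. -/
def HasMove (G : SimpleGraph V) (Φ : Finset V → ℕ) (c : ℕ) (S : Finset V) : Prop :=
  ∃ v, S ⊂ play G S v ∧ Φ (play G S v) + c ≤ Φ S ∧
    ∀ u, play G S v ⊂ play G (play G S v) u → Φ (play G (play G S v) u) + 2 * c ≤ Φ S

theorem mul_domGameVal_le_of_hasMove {Φ : Finset V → ℕ} {c : ℕ} {P : Finset V → Prop}
    (hP : Monotone P)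
    (hmove : ∀ S, P S → S ≠ Finset.univ →
      c * domGameVal H true S ≤ Φ S ∨ HasMove (adjGraph H) Φ c S) :
    ∀ S, P S → c * domGameVal H true S ≤ Φ S := by
  intro S hS
  induction S using WellFoundedGT.induction with | _ S ih
  rcases eq_or_ne S Finset.univ with rfl | hne
  · simp [domGameVal_univ]
  rcases hmove S hS hne with hle | ⟨v, hv, hΦ, hreply⟩
  · exact hle
  have hval := domGameVal_true_le hv
  rcases domGameVal_false_eq H (play (adjGraph H) S v) with hend | ⟨u, hu, hcont⟩
  · calc c * domGameVal H true S ≤ c * 1 := Nat.mul_le_mul_left c (by omega)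
      _ ≤ Φ S := by omega
  · have hrec := ih _ (hv.trans hu) (hP (hv.trans hu).le hS)
    set U := play (adjGraph H) (play (adjGraph H) S v) u
    calc c * domGameVal H true S ≤ c * (2 + domGameVal H true U) :=
          Nat.mul_le_mul_left c (by omega)
      _ = c * domGameVal H true U + 2 * c := by ring
      _ ≤ Φ U + 2 * c := by gcongr
      _ ≤ Φ S := hreply u hu

lemma HasMove.of_le_drop {G : SimpleGraph V} {Φ : Finset V → ℕ} {c d r : ℕ}
    (hreply : ∀ T u, S ⊆ T → T ⊂ play G T u → Φ (play G T u) + r ≤ Φ T)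
    (hv : S ⊂ play G S v) (hd : Φ (play G S v) + d ≤ Φ S) (hcd : c ≤ d) (hc : 2 * c ≤ d + r) :
    HasMove G Φ c S := by
  refine ⟨v, hv, by omega, fun u hu => ?_⟩
  have := hreply _ u subset_play hu
  omega

end Game

/-- The undominated neighbors of `v` when `S` is the set of dominated vertices. As usual for this
game, undominated vertices are called white. -/
noncomputable def whiteNeighbors (G : SimpleGraph V) (S : Finset V) (v : V) : Finset V :=
  G.neighborFinset v \ S

/-- The number of white neighbors of `v`. -/
noncomputable def whiteDegree (G : SimpleGraph V) (S : Finset V) (v : V) : ℕ :=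
  (whiteNeighbors G S v).card

section WhiteDegree

variable {G : SimpleGraph V} {S T A : Finset V} {x a b c d : V}

lemma mem_whiteNeighbors : a ∈ whiteNeighbors G S x ↔ a ∉ S ∧ G.Adj x a := by
  simp [whiteNeighbors, and_comm]

lemma whiteDegree_antitone (h : S ⊆ T) : whiteDegree G T x ≤ whiteDegree G S x :=
  Finset.card_le_card (Finset.sdiff_subset_sdiff subset_rfl h)

lemma whiteDegree_add_card_le (h : S ⊆ T) (hA : ∀ a ∈ A, a ∉ S ∧ a ∈ T ∧ G.Adj x a) :
    whiteDegree G T x + A.card ≤ whiteDegree G S x := by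
  rw [whiteDegree, whiteDegree, ← Finset.card_union_of_disjoint]
  · refine Finset.card_le_card fun u hu => ?_
    simp only [Finset.mem_union, mem_whiteNeighbors] at hu ⊢
    grind
  · refine Finset.disjoint_left.2 fun u hu huA => ?_
    exact (mem_whiteNeighbors.1 hu).1 (hA u huA).2.1

lemma whiteDegree_succ_le (h : S ⊆ T) (ha : a ∉ S) (haT : a ∈ T) (hxa : G.Adj x a) :
    whiteDegree G T x + 1 ≤ whiteDegree G S x := by
  simpa using whiteDegree_add_card_le (A := {a}) h (by simp [ha, haT, hxa])

lemma whiteDegree_add_two_le (h : S ⊆ T) (hab : a ≠ b) (ha : a ∉ S) (haT : a ∈ T)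
    (hxa : G.Adj x a) (hb : b ∉ S) (hbT : b ∈ T) (hxb : G.Adj x b) :
    whiteDegree G T x + 2 ≤ whiteDegree G S x := by
  simpa [hab] using
    whiteDegree_add_card_le (A := {a, b}) h (by simp [ha, haT, hxa, hb, hbT, hxb])

lemma whiteDegree_eq_zero_iff : whiteDegree G S x = 0 ↔ ∀ u, G.Adj x u → u ∈ S := by
  simp only [whiteDegree, Finset.card_eq_zero, Finset.eq_empty_iff_forall_notMem,
    mem_whiteNeighbors]
  grind

lemma card_le_whiteDegree (hA : ∀ a ∈ A, a ∉ S ∧ G.Adj x a) : A.card ≤ whiteDegree G S x :=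
  Finset.card_le_card fun a ha => mem_whiteNeighbors.2 (hA a ha)

lemma one_le_whiteDegree (ha : a ∉ S) (hxa : G.Adj x a) : 1 ≤ whiteDegree G S x := by
  simpa using card_le_whiteDegree (A := {a}) (by simp [ha, hxa])

lemma two_le_whiteDegree (hab : a ≠ b) (ha : a ∉ S) (hxa : G.Adj x a) (hb : b ∉ S)
    (hxb : G.Adj x b) : 2 ≤ whiteDegree G S x := by
  simpa [hab] using card_le_whiteDegree (A := {a, b}) (by simp [ha, hxa, hb, hxb])

lemma three_le_whiteDegree (hab : a ≠ b) (hac : a ≠ c) (hbc : b ≠ c) (ha : a ∉ S)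
    (hxa : G.Adj x a) (hb : b ∉ S) (hxb : G.Adj x b) (hc : c ∉ S) (hxc : G.Adj x c) :
    3 ≤ whiteDegree G S x := by
  simpa [hab, hac, hbc] using
    card_le_whiteDegree (A := {a, b, c}) (by simp [ha, hxa, hb, hxb, hc, hxc])

lemma four_le_whiteDegree (hab : a ≠ b) (hac : a ≠ c) (had : a ≠ d) (hbc : b ≠ c) (hbd : b ≠ d)
    (hcd : c ≠ d) (ha : a ∉ S) (hxa : G.Adj x a) (hb : b ∉ S) (hxb : G.Adj x b)
    (hc : c ∉ S) (hxc : G.Adj x c) (hd : d ∉ S) (hxd : G.Adj x d) : 4 ≤ whiteDegree G S x := by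
  simpa [hab, hac, had, hbc, hbd, hcd] using
    card_le_whiteDegree (A := {a, b, c, d}) (by simp [ha, hxa, hb, hxb, hc, hxc, hd, hxd])

lemma exists_white_of_one_le (h : 1 ≤ whiteDegree G S x) : ∃ a ∉ S, G.Adj x a := by
  obtain ⟨a, ha⟩ := Finset.card_pos.1 h
  exact ⟨a, mem_whiteNeighbors.1 ha⟩

lemma exists_white_of_card_lt (h : A.card < whiteDegree G S x) : ∃ a ∉ A, a ∉ S ∧ G.Adj x a := by
  obtain ⟨a, ha, haA⟩ := Finset.exists_mem_notMem_of_card_lt_card h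
  exact ⟨a, haA, mem_whiteNeighbors.1 ha⟩

lemma exists_white_ne (h : 2 ≤ whiteDegree G S x) (a : V) : ∃ b ≠ a, b ∉ S ∧ G.Adj x b := by
  simpa using exists_white_of_card_lt (A := {a}) (by simpa [Nat.lt_iff_add_one_le] using h)

lemma exists_white_ne_ne (h : 3 ≤ whiteDegree G S x) (a b : V) :
    ∃ c, c ≠ a ∧ c ≠ b ∧ c ∉ S ∧ G.Adj x c := by
  simpa [and_assoc] using exists_white_of_card_lt (A := {a, b}) (Finset.card_le_two.trans_lt h)

lemma exists_two_white (h : 2 ≤ whiteDegree G S x) :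
    ∃ a b, a ≠ b ∧ (a ∉ S ∧ G.Adj x a) ∧ b ∉ S ∧ G.Adj x b := by
  obtain ⟨a, ha⟩ := exists_white_of_one_le (one_le_two.trans h)
  obtain ⟨b, hba, hb⟩ := exists_white_ne h a
  exact ⟨a, b, hba.symm, ha, hb⟩

lemma eq_of_whiteDegree_le_one (h : whiteDegree G S x ≤ 1) (ha : a ∉ S) (hxa : G.Adj x a)
    (hb : b ∉ S) (hxb : G.Adj x b) : a = b :=
  Finset.card_le_one.1 h a (mem_whiteNeighbors.2 ⟨ha, hxa⟩) b (mem_whiteNeighbors.2 ⟨hb, hxb⟩)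

lemma whiteDegree_play_self : whiteDegree G (play G S x) x = 0 :=
  whiteDegree_eq_zero_iff.2 fun _ => mem_play_of_adj

end WhiteDegree

/-! ### Weights -/

/-- The weight of `x` in the position with dominated set `S`: white vertices weigh 15, dominated
vertices with no white neighbor weigh 0, and the other dominated vertices weigh
`b x + whiteDegree G S x`, capped at 7. The base `b` decreases from one phase of the strategy to
the next. -/
noncomputable def weight (G : SimpleGraph V) (b : V → ℕ) (S : Finset V) (x : V) : ℕ :=
  if x ∉ S then 15
  else if whiteDegree G S x = 0 then 0
  else min (b x + whiteDegree G S x) 7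

/-- The total weight of a position. -/
noncomputable def potential (G : SimpleGraph V) (b : V → ℕ) (S : Finset V) : ℕ :=
  ∑ x, weight G b S x

section Weight

variable {G : SimpleGraph V} {b b' : V → ℕ} {S T : Finset V} {u v x y z : V} {d j m : ℕ}

lemma weight_antitone (h : S ⊆ T) : weight G b T x ≤ weight G b S x := by
  have := whiteDegree_antitone (G := G) (x := x) h
  have := @h x
  grind [weight]

lemma weight_add_fifteen_le (hx : x ∉ S) (hxT : x ∈ T) (h : whiteDegree G T x = 0) :
    weight G b T x + 15 ≤ weight G b S x := by
  simp [weight, hx, hxT, h]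

lemma weight_add_fifteen_le_of_adj (hx1 : whiteDegree G S x ≤ 1) (hST : S ⊆ T) (hx : x ∉ S)
    (hxT : x ∈ T) (hv : v ∉ S) (hvT : v ∈ T) (hxv : G.Adj x v) :
    weight G b T x + 15 ≤ weight G b S x := by
  have := whiteDegree_succ_le hST hv hvT hxv
  exact weight_add_fifteen_le hx hxT (by omega)

lemma weight_add_eight_le (hx : x ∉ S) (hxT : x ∈ T) :
    weight G b T x + 8 ≤ weight G b S x := by
  grind [weight]

lemma weight_add_nine_le (hx : x ∉ S) (hxT : x ∈ T) (hb : b x ≤ 5) (h : whiteDegree G T x ≤ 1) :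
    weight G b T x + 9 ≤ weight G b S x := by
  grind [weight]

lemma weight_add_le_of_whiteDegree_eq_zero (hxT : x ∈ T) (h : whiteDegree G T x = 0)
    (hpos : 1 ≤ whiteDegree G S x) (hd : d ≤ b x + whiteDegree G S x) (hd7 : d ≤ 7) :
    weight G b T x + d ≤ weight G b S x := by
  grind [weight]

lemma weight_add_le_of_whiteDegree_add_le (hx : x ∈ S) (hST : S ⊆ T)
    (h : whiteDegree G T x + j ≤ whiteDegree G S x) (hb : b x + whiteDegree G T x + j ≤ 7) :
    weight G b T x + j ≤ weight G b S x := by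
  have := hST hx
  grind [weight]

lemma potential_mono_base (h : b ≤ b') : potential G b S ≤ potential G b' S :=
  Finset.sum_le_sum fun x _ => by
    have := h x
    grind [weight]

lemma potential_empty (b : V → ℕ) : potential G b ∅ = 15 * Fintype.card V := by
  simp [potential, weight, mul_comm]

lemma potential_add_le (hST : S ⊆ T) (l : List (V × ℕ)) (hl : (l.map Prod.fst).Nodup)
    (hdrop : ∀ p ∈ l, weight G b T p.1 + p.2 ≤ weight G b S p.1) :
    potential G b T + (l.map Prod.snd).sum ≤ potential G b S := by
  set A := (l.map Prod.fst).toFinset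
  have hA : ∑ x ∈ A, weight G b T x + (l.map Prod.snd).sum ≤ ∑ x ∈ A, weight G b S x := by
    rw [List.sum_toFinset _ hl, List.sum_toFinset _ hl, List.map_map, List.map_map,
      ← List.sum_map_add]
    exact List.sum_le_sum hdrop
  have hAc : ∑ x ∈ Aᶜ, weight G b T x ≤ ∑ x ∈ Aᶜ, weight G b S x :=
    Finset.sum_le_sum fun x _ => weight_antitone hST
  rw [potential, potential, ← Finset.sum_add_sum_compl A, ← Finset.sum_add_sum_compl A]
  omega

lemma potential_play_add_le (hv : weight G b (play G S v) v + d ≤ weight G b S v) :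
    potential G b (play G S v) + (d + 8 * whiteDegree G S v) ≤ potential G b S := by
  have hne : v ∉ whiteNeighbors G S v := fun h => (mem_whiteNeighbors.1 h).2.ne rfl
  have hdrop := potential_add_le (G := G) (b := b) (T := play G S v) subset_play
    ((v, d) :: (whiteNeighbors G S v).toList.map fun x => (x, 8))
    (by simpa [Function.comp_def, hne] using Finset.nodup_toList _)
    (by
      simp only [List.forall_mem_cons, List.forall_mem_map, Finset.mem_toList]
      refine ⟨hv, fun x hx => ?_⟩
      obtain ⟨hxS, hvx⟩ := mem_whiteNeighbors.1 hx
      exact weight_add_eight_le hxS (mem_play_of_adj hvx))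
  simpa [Function.comp_def, whiteDegree, mul_comm] using hdrop

lemma weight_play_self_of_notMem (hv : v ∉ S) :
    weight G b (play G S v) v + 15 ≤ weight G b S v :=
  weight_add_fifteen_le hv self_mem_play whiteDegree_play_self

lemma potential_play_add_fifteen_le (hv : v ∉ S) :
    potential G b (play G S v) + 15 ≤ potential G b S := by
  have := potential_play_add_le (weight_play_self_of_notMem (G := G) (b := b) hv)
  omega

lemma potential_reply_add_le (hb : ∀ x, m ≤ b x) (hm : m ≤ 6) (hu : S ⊂ play G S u) :
    potential G b (play G S u) + (m + 9) ≤ potential G b S := by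
  by_cases huS : u ∈ S
  · obtain ⟨x, hx, hux⟩ := exists_adj_of_ssubset_play hu huS
    have hpos := one_le_whiteDegree hx hux
    have hdrop : weight G b (play G S u) u + (m + 1) ≤ weight G b S u :=
      weight_add_le_of_whiteDegree_eq_zero self_mem_play whiteDegree_play_self hpos
        (Nat.add_le_add (hb u) hpos) (by omega)
    have := potential_play_add_le hdrop
    omega
  · have := potential_play_add_fifteen_le (G := G) (b := b) huS
    omega

lemma potential_play_add_fortyFive_le (hb : 4 ≤ b u) (hu3 : 3 ≤ whiteDegree G S u)
    (hy : y ∉ S) (hz : z ∉ S) (hzy : G.Adj z y) (hz1 : whiteDegree G S z ≤ 1)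
    (hy1 : whiteDegree G S y ≤ 1) (huz : G.Adj u z) (huy : G.Adj u y) :
    potential G b (play G S u) + 45 ≤ potential G b S := by
  obtain ⟨x, hxz, hxy, hx, hux⟩ := exists_white_ne_ne hu3 z y
  have hzT : z ∈ play G S u := mem_play_of_adj huz
  have hyT : y ∈ play G S u := mem_play_of_adj huy
  refine potential_add_le subset_play [(u, 7), (z, 15), (y, 15), (x, 8)] ?_ ?_
  · simp [huz.ne, huy.ne, hux.ne, hzy.ne, hxz.symm, hxy.symm]
  · simpa using ⟨weight_add_le_of_whiteDegree_eq_zero self_mem_play whiteDegree_play_self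
      (by omega) (by omega) le_rfl,
      weight_add_fifteen_le_of_adj hz1 subset_play hz hzT hy hyT hzy,
      weight_add_fifteen_le_of_adj hy1 subset_play hy hyT hz hzT hzy.symm,
      weight_add_eight_le hx (mem_play_of_adj hux)⟩

end Weight

/-! ### Base 5 -/

/-- White vertices have at most two white neighbors, and dominated ones at most three: no move
dominates more than three vertices. -/
structure LowDegree (G : SimpleGraph V) (S : Finset V) : Prop where
  whiteDegree_le_two : ∀ ⦃x⦄, x ∉ S → whiteDegree G S x ≤ 2
  whiteDegree_le_three : ∀ x, whiteDegree G S x ≤ 3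

section LowDegree

variable {G : SimpleGraph V} {S T : Finset V} {p q u v x z : V}

lemma LowDegree.mono (h : LowDegree G S) (hST : S ⊆ T) : LowDegree G T where
  whiteDegree_le_two _ hx :=
    (whiteDegree_antitone hST).trans (h.whiteDegree_le_two fun hxS => hx (hST hxS))
  whiteDegree_le_three x := (whiteDegree_antitone hST).trans (h.whiteDegree_le_three x)

lemma LowDegree.weight_add_nine_le (h : LowDegree G S) (hST : S ⊆ T) {b : V → ℕ} (hb : b x ≤ 5)
    (hx : x ∉ S) (hxT : x ∈ T) (hv : v ∉ S) (hvT : v ∈ T) (hxv : G.Adj x v) :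
    weight G b T x + 9 ≤ weight G b S x := by
  have := h.whiteDegree_le_two hx
  have := whiteDegree_succ_le hST hv hvT hxv
  exact DomGame.weight_add_nine_le hx hxT hb (by omega)

lemma hasMove_of_potential_add_forty_le (hv : S ⊂ play G S v)
    (h : potential G 5 (play G S v) + 40 ≤ potential G 5 S) : HasMove G (potential G 5) 27 S :=
  HasMove.of_le_drop
    (fun _ _ _ hu => potential_reply_add_le (fun _ => le_rfl) (Nat.le_succ 5) hu)
    hv h (by norm_num) (by norm_num)

lemma LowDegree.hasMove_of_white_path_end (h : LowDegree G S) (htri : EdgesInTriangles G)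
    (hv : v ∉ S) (hp : p ∉ S) (hvp : G.Adj v p) (hv2 : whiteDegree G S v = 2)
    (hp1 : whiteDegree G S p = 1) : HasMove G (potential G 5) 27 S := by
  obtain ⟨q, hqp, hq, hvq⟩ := exists_white_ne hv2.ge p
  obtain ⟨c, hcv, hcp⟩ := htri hvp
  have hc : c ∈ S := by
    by_contra hc
    exact hcv.ne (eq_of_whiteDegree_le_one hp1.le hc hcp.symm hv hvp.symm)
  have hcq : c ≠ q := fun hcq => hq (hcq ▸ hc)
  have hcT := whiteDegree_add_two_le (T := play G S v) subset_play hvp.ne hv self_mem_play hcv hp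
    (mem_play_of_adj hvp) hcp
  have hc3 := h.whiteDegree_le_three c
  refine hasMove_of_potential_add_forty_le (ssubset_play_self hv) <|
    potential_add_le subset_play [(v, 15), (p, 15), (q, 9), (c, 1)] ?_ ?_
  · simp [hvp.ne, hvq.ne, hqp.symm, hcv.ne.symm, hcp.ne.symm, hcq.symm]
  · simpa using ⟨weight_play_self_of_notMem hv,
      weight_add_fifteen_le_of_adj hp1.le subset_play hp (mem_play_of_adj hvp) hv self_mem_play
        hvp.symm,
      h.weight_add_nine_le subset_play le_rfl hq (mem_play_of_adj hvq) hv self_mem_play hvq.symm,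
      weight_add_le_of_whiteDegree_add_le hc subset_play (b := 5) (j := 1) (by omega)
        (by simp only [Pi.ofNat_apply]; omega)⟩

lemma LowDegree.hasMove_of_white_triangle (h : LowDegree G S) (hv : v ∉ S) (hp : p ∉ S)
    (hq : q ∉ S) (hvp : G.Adj v p) (hvq : G.Adj v q) (hpq : G.Adj p q) :
    HasMove G (potential G 5) 27 S := by
  have hpT := whiteDegree_add_two_le (T := play G S v) subset_play hvq.ne hv self_mem_play hvp.symm
    hq (mem_play_of_adj hvq) hpq
  have hqT := whiteDegree_add_two_le (T := play G S v) subset_play hvp.ne hv self_mem_play hvq.symm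
    hp (mem_play_of_adj hvp) hpq.symm
  have hp2 := h.whiteDegree_le_two hp
  have hq2 := h.whiteDegree_le_two hq
  suffices hdrop : potential G 5 (play G S v) + 45 ≤ potential G 5 S from
    hasMove_of_potential_add_forty_le (ssubset_play_self hv) (by omega)
  refine potential_add_le subset_play [(v, 15), (p, 15), (q, 15)] ?_ ?_
  · simp [hvp.ne, hvq.ne, hpq.ne]
  · simpa using ⟨weight_play_self_of_notMem hv,
      weight_add_fifteen_le hp (mem_play_of_adj hvp) (by omega),
      weight_add_fifteen_le hq (mem_play_of_adj hvq) (by omega)⟩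

lemma LowDegree.hasMove_of_dominated_adj_white_path (h : LowDegree G S) (hp : p ∉ S)
    (hv : v ∉ S) (hq : q ∉ S) (hpq : p ≠ q) (hvp : G.Adj v p) (hvq : G.Adj v q)
    (hup : G.Adj u p) (huv : G.Adj u v) (huq : G.Adj u q) (hu : u ∈ S) :
    HasMove G (potential G 5) 27 S := by
  have huS := whiteDegree_add_card_le (G := G) (A := {v, p, q}) (x := u) (T := play G S v)
    subset_play (by simp [*, self_mem_play, mem_play_of_adj])
  rw [Finset.card_eq_three.2 ⟨v, p, q, hvp.ne, hvq.ne, hpq, rfl⟩] at huS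
  have hu3 := h.whiteDegree_le_three u
  refine hasMove_of_potential_add_forty_le (ssubset_play_self hv) <|
    potential_add_le subset_play [(v, 15), (p, 9), (q, 9), (u, 7)] ?_ ?_
  · simp [hvp.ne, hvq.ne, hpq, hup.ne.symm, huv.ne.symm, huq.ne.symm]
  · simpa using ⟨weight_play_self_of_notMem hv,
      h.weight_add_nine_le subset_play le_rfl hp (mem_play_of_adj hvp) hv self_mem_play hvp.symm,
      h.weight_add_nine_le subset_play le_rfl hq (mem_play_of_adj hvq) hv self_mem_play hvq.symm,
      weight_add_le_of_whiteDegree_eq_zero (subset_play hu) (by omega) (by omega)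
        (by simp only [Pi.ofNat_apply]; omega) le_rfl⟩

lemma LowDegree.hasMove_of_dominated_adj_isolated_white (h : LowDegree G S) (hz : z ∉ S)
    (hz0 : whiteDegree G S z = 0) (hx : x ∉ S) (hv : v ∉ S) (hxv : G.Adj x v) (huz : G.Adj u z)
    (hux : G.Adj u x) (huv : G.Adj u v) : HasMove G (potential G 5) 27 S := by
  have hzadj := whiteDegree_eq_zero_iff.1 hz0
  have hzx : z ≠ x := fun hzx => hv (hzadj v (hzx ▸ hxv))
  have hzv : z ≠ v := fun hzv => hx (hzadj x (hzv ▸ hxv.symm))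
  have hu2 := two_le_whiteDegree hxv.ne hx hux hv huv
  have hzT := whiteDegree_antitone (G := G) (x := z) (subset_play (G := G) (S := S) (v := u))
  refine hasMove_of_potential_add_forty_le (ssubset_play_of_adj hx hux) <|
    potential_add_le subset_play [(u, 7), (z, 15), (x, 9), (v, 9)] ?_ ?_
  · simp [huz.ne, hux.ne, huv.ne, hzx, hzv, hxv.ne]
  · simpa using ⟨weight_add_le_of_whiteDegree_eq_zero self_mem_play whiteDegree_play_self
        (by omega) (by simp only [Pi.ofNat_apply]; omega) le_rfl,
      weight_add_fifteen_le hz (mem_play_of_adj huz) (by omega),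
      h.weight_add_nine_le subset_play le_rfl hx (mem_play_of_adj hux) hv (mem_play_of_adj huv)
        hxv,
      h.weight_add_nine_le subset_play le_rfl hv (mem_play_of_adj huv) hx (mem_play_of_adj hux)
        hxv.symm⟩

lemma hasMove_of_three_white (hx : x ∉ S) (hz : z ∉ S) (hzx : G.Adj z x)
    (hz1 : whiteDegree G S z ≤ 1) (hx1 : whiteDegree G S x ≤ 1) (huz : G.Adj u z)
    (hux : G.Adj u x) (hu3 : 3 ≤ whiteDegree G S u) : HasMove G (potential G 5) 27 S := by
  have := potential_play_add_fortyFive_le (b := 5) (Nat.le_succ 4) hu3 hx hz hzx hz1 hx1 huz hux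
  exact hasMove_of_potential_add_forty_le (ssubset_play_of_adj hz huz) (by omega)

end LowDegree

/-! ### Base 4 at the links -/

/-- The dominated vertices adjacent to both ends of an edge joining two white vertices of white
degree two. In the positions where they are used, these edges form cycles. -/
noncomputable def cycleLinks (G : SimpleGraph V) (S : Finset V) : Finset V :=
  Finset.univ.filter fun u => u ∈ S ∧ ∃ x y, x ∉ S ∧ y ∉ S ∧ G.Adj x y ∧
    whiteDegree G S x = 2 ∧ whiteDegree G S y = 2 ∧ G.Adj u x ∧ G.Adj u y

/-- The base of the weights in the last phase, which starts with the dominated set `S`. -/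
noncomputable def linkBase (G : SimpleGraph V) (S : Finset V) (x : V) : ℕ :=
  if x ∈ cycleLinks G S then 4 else 5

/-- The positions in which the second phase ends: few white neighbors, and no move that is good
enough for the base `5`. The standing assumptions on `G` are included. -/
structure Exhausted (G : SimpleGraph V) (S : Finset V) : Prop extends LowDegree G S where
  edgesInTriangles : EdgesInTriangles G
  exists_adj : ∀ v, ∃ u, G.Adj v u
  not_hasMove : ¬ HasMove G (potential G 5) 27 S

section Exhausted

variable {G : SimpleGraph V} {S : Finset V} {p p' q q' u v x z : V}

lemma mem_cycleLinks : u ∈ cycleLinks G S ↔ u ∈ S ∧ ∃ x y, x ∉ S ∧ y ∉ S ∧ G.Adj x y ∧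
    whiteDegree G S x = 2 ∧ whiteDegree G S y = 2 ∧ G.Adj u x ∧ G.Adj u y := by
  simp [cycleLinks]

lemma four_le_linkBase (x : V) : 4 ≤ linkBase G S x := by
  grind [linkBase]

lemma linkBase_le_five (x : V) : linkBase G S x ≤ 5 := by
  grind [linkBase]

namespace Exhausted

lemma whiteDegree_eq_of_adj (h : Exhausted G S) (hx : x ∉ S) (hp : p ∉ S) (hxp : G.Adj x p) :
    whiteDegree G S x = whiteDegree G S p := by
  have := h.whiteDegree_le_two hx
  have := h.whiteDegree_le_two hp
  have := one_le_whiteDegree hp hxp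
  have := one_le_whiteDegree hx hxp.symm
  by_contra hne
  rcases (by omega : whiteDegree G S x = 2 ∧ whiteDegree G S p = 1 ∨
    whiteDegree G S p = 2 ∧ whiteDegree G S x = 1) with ⟨h2, h1⟩ | ⟨h2, h1⟩
  exacts [h.not_hasMove (h.hasMove_of_white_path_end h.edgesInTriangles hx hp hxp h2 h1),
    h.not_hasMove (h.hasMove_of_white_path_end h.edgesInTriangles hp hx hxp.symm h2 h1)]

lemma exists_dominated_adj_adj (h : Exhausted G S) (hx : x ∉ S) (hp : p ∉ S) (hxp : G.Adj x p) :
    ∃ w ∈ S, G.Adj w x ∧ G.Adj w p := by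
  obtain ⟨w, hwx, hwp⟩ := h.edgesInTriangles hxp
  refine ⟨w, ?_, hwx, hwp⟩
  by_contra hw
  exact h.not_hasMove (h.hasMove_of_white_triangle hx hp hw hxp hwx.symm hwp.symm)

lemma exists_cycleLink (h : Exhausted G S) (hx : x ∉ S) (hp : p ∉ S) (hxp : G.Adj x p)
    (hx2 : whiteDegree G S x = 2) : ∃ w ∈ cycleLinks G S, G.Adj w x ∧ G.Adj w p := by
  obtain ⟨w, hw, hwx, hwp⟩ := h.exists_dominated_adj_adj hx hp hxp
  exact ⟨w, mem_cycleLinks.2 ⟨hw, x, p, hx, hp, hxp, hx2,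
    (h.whiteDegree_eq_of_adj hx hp hxp).symm.trans hx2, hwx, hwp⟩, hwx, hwp⟩

lemma notMem_cycleLinks_of_adj (h : Exhausted G S) (hxp : x ≠ p) (hx : x ∉ S) (hux : G.Adj u x)
    (hx1 : whiteDegree G S x = 1) (hp : p ∉ S) (hup : G.Adj u p) (hp1 : whiteDegree G S p = 1) :
    u ∉ cycleLinks G S := by
  intro hu
  obtain ⟨-, a, b, ha, hb, hab, ha2, hb2, hua, hub⟩ := mem_cycleLinks.1 hu
  have := four_le_whiteDegree hxp (c := a) (d := b) (by grind) (by grind) (by grind) (by grind)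
    hab.ne hx hux hp hup ha hua hb hub
  have := h.whiteDegree_le_three u
  omega

lemma exists_notMem_cycleLinks (h : Exhausted G S) (hx : x ∉ S) (hp : p ∉ S) (hxp : G.Adj x p)
    (hx1 : whiteDegree G S x = 1) : ∃ w ∈ S, w ∉ cycleLinks G S ∧ whiteDegree G S w ≤ 2 ∧
      G.Adj w x ∧ G.Adj w p := by
  obtain ⟨w, hw, hwx, hwp⟩ := h.exists_dominated_adj_adj hx hp hxp
  have hp1 := (h.whiteDegree_eq_of_adj hx hp hxp).symm.trans hx1
  have hw2 : whiteDegree G S w ≤ 2 := by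
    by_contra! hw3
    exact h.not_hasMove (hasMove_of_three_white hp hx hxp hx1.le hp1.le hwx hwp hw3)
  exact ⟨w, hw, h.notMem_cycleLinks_of_adj hxp.ne hx hwx hx1 hp hwp hp1, hw2, hwx, hwp⟩

lemma not_dominated_adj_white_path (h : Exhausted G S) (hp : p ∉ S) (hv : v ∉ S) (hq : q ∉ S)
    (hpq : p ≠ q) (hvp : G.Adj v p) (hvq : G.Adj v q) (hup : G.Adj u p) (huv : G.Adj u v)
    (hu : u ∈ S) : ¬ G.Adj u q := fun huq =>
  h.not_hasMove (h.hasMove_of_dominated_adj_white_path hp hv hq hpq hvp hvq hup huv huq hu)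

lemma not_adj_of_white_path (h : Exhausted G S) (hv : v ∉ S) (hp : p ∉ S) (hq : q ∉ S)
    (hp' : p' ∉ S) (hq' : q' ∉ S) (hpq : p ≠ q) (hvp : G.Adj v p) (hvq : G.Adj v q)
    (hpp' : G.Adj p p') (hqq' : G.Adj q q') (hu : u ∈ S) (hup : G.Adj u p) (hup' : G.Adj u p')
    (huq : G.Adj u q) : ¬ G.Adj u q' := by
  intro huq'
  have hp'q : p' ≠ q := by
    rintro rfl
    exact h.not_hasMove (h.hasMove_of_white_triangle hv hp hq hvp hvq hpp')
  have hpq' : p ≠ q' := by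
    rintro rfl
    exact h.not_hasMove (h.hasMove_of_white_triangle hv hp hq hvp hvq hqq'.symm)
  rcases eq_or_ne p' q' with rfl | hp'q'
  · exact h.not_dominated_adj_white_path hp hp' hq hpq hpp'.symm hqq'.symm hup hup' hu huq
  · have := four_le_whiteDegree hpp'.ne hpq hpq' hp'q hp'q' hqq'.ne hp hup hp' hup' hq huq hq' huq'
    have := h.whiteDegree_le_three u
    omega

lemma notMem_cycleLinks_of_adj_isolated (h : Exhausted G S) (hz : z ∉ S)
    (hz0 : whiteDegree G S z = 0) (huz : G.Adj u z) : u ∉ cycleLinks G S := fun hu => by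
  obtain ⟨-, a, b, ha, hb, hab, -, -, hua, hub⟩ := mem_cycleLinks.1 hu
  exact h.not_hasMove (h.hasMove_of_dominated_adj_isolated_white hz hz0 ha hb hab huz hua hub)

end Exhausted

end Exhausted

section LinkBase

variable {G : SimpleGraph V} {S₀ S T : Finset V} {u w x : V} {d j : ℕ}

lemma notMem_cycleLinks (hx : x ∉ S₀) : x ∉ cycleLinks G S₀ := fun h => hx (mem_cycleLinks.1 h).1

lemma LowDegree.linkBase_add_le_of_mem (h : LowDegree G S₀) (hx : x ∈ cycleLinks G S₀) :
    linkBase G S₀ x + whiteDegree G S₀ x ≤ 7 := by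
  have := h.whiteDegree_le_three x
  rw [linkBase, if_pos hx]
  omega

lemma LowDegree.linkBase_add_le_of_notMem (h : LowDegree G S₀) (hx : x ∉ S₀) :
    linkBase G S₀ x + whiteDegree G S₀ x ≤ 7 :=
  Nat.add_le_add (linkBase_le_five x) (h.whiteDegree_le_two hx)

-- By `hw` the cap at 7 is inactive for `w`, so its weight decreases with its white degree.
lemma weight_linkBase_add_le (hw : linkBase G S₀ w + whiteDegree G S₀ w ≤ 7) (hS : S₀ ⊆ S)
    (hST : S ⊆ T) (hwS : w ∈ S) (hj : whiteDegree G T w + j ≤ whiteDegree G S w) :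
    weight G (linkBase G S₀) T w + j ≤ weight G (linkBase G S₀) S w := by
  have := whiteDegree_antitone (G := G) (x := w) hS
  exact weight_add_le_of_whiteDegree_add_le hwS hST hj (by omega)

lemma weight_linkBase_play_self_add_le (hpos : 1 ≤ whiteDegree G S u)
    (hd : d ≤ 4 + whiteDegree G S u) (hd7 : d ≤ 7) :
    weight G (linkBase G S₀) (play G S u) u + d ≤ weight G (linkBase G S₀) S u := by
  have := four_le_linkBase (G := G) (S := S₀) u
  exact weight_add_le_of_whiteDegree_eq_zero self_mem_play whiteDegree_play_self hpos (by omega)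
    hd7

end LinkBase

namespace Exhausted

variable {G : SimpleGraph V} {S₀ S : Finset V} {p q u v x : V}

lemma exists_linkBase_add_le (h : Exhausted G S₀) (hx : x ∉ S₀) (hp : p ∉ S₀) (hxp : G.Adj x p) :
    ∃ w ∈ S₀, linkBase G S₀ w + whiteDegree G S₀ w ≤ 7 ∧ G.Adj w x ∧ G.Adj w p := by
  have := h.whiteDegree_le_two hx
  have := one_le_whiteDegree hp hxp
  obtain h2 | h1 : whiteDegree G S₀ x = 2 ∨ whiteDegree G S₀ x = 1 := by omega
  · obtain ⟨w, hw, hadj⟩ := h.exists_cycleLink hx hp hxp h2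
    exact ⟨w, (mem_cycleLinks.1 hw).1, h.linkBase_add_le_of_mem hw, hadj⟩
  · obtain ⟨w, hw, -, hw2, hadj⟩ := h.exists_notMem_cycleLinks hx hp hxp h1
    exact ⟨w, hw, Nat.add_le_add (linkBase_le_five w) hw2, hadj⟩

lemma exists_weight_add_one_le_of_unique_white (h : Exhausted G S₀) (hS : S₀ ⊆ S)
    (hu1 : whiteDegree G S u ≤ 1) (hx : x ∉ S) (hux : G.Adj u x) (hp : p ∉ S) (hxp : G.Adj x p) :
    ∃ w ∈ S₀, u ≠ w ∧ x ≠ w ∧ G.Adj w x ∧ G.Adj w p ∧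
      weight G (linkBase G S₀) (play G S u) w + 1 ≤ weight G (linkBase G S₀) S w := by
  obtain ⟨w, hw, hw7, hwx, hwp⟩ :=
    h.exists_linkBase_add_le (Finset.notMem_mono hS hx) (Finset.notMem_mono hS hp) hxp
  have huw : u ≠ w := by
    rintro rfl
    exact hxp.ne (eq_of_whiteDegree_le_one hu1 hx hux hp hwp)
  exact ⟨w, hw, huw, hwx.ne.symm, hwx, hwp, weight_linkBase_add_le hw7 hS subset_play (hS hw)
    (whiteDegree_succ_le subset_play hx (mem_play_of_adj hux) hwx)⟩

lemma potential_reply_add_fifteen_le_of_unique_white (h : Exhausted G S₀) (hS : S₀ ⊆ S)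
    (hu1 : whiteDegree G S u ≤ 1) (hx : x ∉ S) (hux : G.Adj u x) :
    potential G (linkBase G S₀) (play G S u) + 15 ≤ potential G (linkBase G S₀) S := by
  have hpos := one_le_whiteDegree hx hux
  have hdu : weight G (linkBase G S₀) (play G S u) u + 5 ≤ weight G (linkBase G S₀) S u :=
    weight_linkBase_play_self_add_le hpos (Nat.add_le_add_left hpos 4) (by norm_num)
  have hxT : x ∈ play G S u := mem_play_of_adj hux
  have hnotMem : ∀ {p}, p ∉ play G S u → p ∉ S := fun hp => Finset.notMem_mono subset_play hp
  by_cases hx2 : 2 ≤ whiteDegree G (play G S u) x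
  · obtain ⟨p, q, hpq, ⟨hp, hxp⟩, hq, hxq⟩ := exists_two_white hx2
    obtain ⟨w, hw, huw, hxw, hwx, hwp, hdw⟩ :=
      h.exists_weight_add_one_le_of_unique_white hS hu1 hx hux (hnotMem hp) hxp
    obtain ⟨w', -, huw', hxw', -, hwq', hdw'⟩ :=
      h.exists_weight_add_one_le_of_unique_white hS hu1 hx hux (hnotMem hq) hxq
    have hww' : w ≠ w' := by
      rintro rfl
      exact h.not_dominated_adj_white_path (Finset.notMem_mono hS (hnotMem hp))
        (Finset.notMem_mono hS hx) (Finset.notMem_mono hS (hnotMem hq)) hpq hxp hxq hwp hwx hw hwq'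
    refine potential_add_le subset_play [(u, 5), (x, 8), (w, 1), (w', 1)] ?_ ?_
    · simp [hux.ne, huw, hxw, huw', hxw', hww']
    · simpa using ⟨hdu, weight_add_eight_le hx hxT, hdw, hdw'⟩
  by_cases hx0 : whiteDegree G (play G S u) x = 0
  · suffices hdrop : potential G (linkBase G S₀) (play G S u) + 20 ≤
      potential G (linkBase G S₀) S by omega
    refine potential_add_le subset_play [(u, 5), (x, 15)] ?_ ?_
    · simp [hux.ne]
    · simpa using ⟨hdu, weight_add_fifteen_le hx hxT hx0⟩
  · obtain ⟨p, hp, hxp⟩ := exists_white_of_one_le (Nat.one_le_iff_ne_zero.2 hx0)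
    obtain ⟨w, -, huw, hxw, -, -, hdw⟩ :=
      h.exists_weight_add_one_le_of_unique_white hS hu1 hx hux (hnotMem hp) hxp
    refine potential_add_le subset_play [(u, 5), (x, 9), (w, 1)] ?_ ?_
    · simp [hux.ne, huw, hxw]
    · simpa using ⟨hdu, weight_add_nine_le hx hxT (linkBase_le_five x) (by omega), hdw⟩

lemma potential_reply_add_fifteen_le (h : Exhausted G S₀) (hS : S₀ ⊆ S)
    (hu : S ⊂ play G S u) :
    potential G (linkBase G S₀) (play G S u) + 15 ≤ potential G (linkBase G S₀) S := by
  by_cases huS : u ∈ S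
  · obtain ⟨x, hx, hux⟩ := exists_adj_of_ssubset_play hu huS
    rcases le_or_gt (whiteDegree G S u) 1 with hu1 | hu2
    · exact h.potential_reply_add_fifteen_le_of_unique_white hS hu1 hx hux
    · have hdu : weight G (linkBase G S₀) (play G S u) u + 6 ≤ weight G (linkBase G S₀) S u :=
        weight_linkBase_play_self_add_le (by omega) (by omega) (by norm_num)
      have := potential_play_add_le hdu
      omega
  · exact potential_play_add_fifteen_le huS

lemma hasMove_of_potential_add_thirtyNine_le (h : Exhausted G S₀) (hS : S₀ ⊆ S)
    (hv : S ⊂ play G S v)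
    (hd : potential G (linkBase G S₀) (play G S v) + 39 ≤ potential G (linkBase G S₀) S) :
    HasMove G (potential G (linkBase G S₀)) 27 S :=
  HasMove.of_le_drop (fun _ _ hT hu => h.potential_reply_add_fifteen_le (hS.trans hT) hu) hv hd
    (by norm_num) (by norm_num)

lemma whiteDegree_eq_two (h : Exhausted G S₀) (hv : v ∉ S₀) (hpq : p ≠ q) (hp : p ∉ S₀)
    (hvp : G.Adj v p) (hq : q ∉ S₀) (hvq : G.Adj v q) : whiteDegree G S₀ v = 2 :=
  (h.whiteDegree_le_two hv).antisymm (two_le_whiteDegree hpq hp hvp hq hvq)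

lemma exists_four_links (h : Exhausted G S₀) (hv : v ∉ S₀) (hpq : p ≠ q) (hp : p ∉ S₀)
    (hvp : G.Adj v p) (hq : q ∉ S₀) (hvq : G.Adj v q) :
    ∃ a ∈ cycleLinks G S₀, ∃ b ∈ cycleLinks G S₀, ∃ c ∈ cycleLinks G S₀, ∃ d ∈ cycleLinks G S₀,
      [a, b, c, d].Nodup ∧ (G.Adj a v ∧ G.Adj a p) ∧ (G.Adj b v ∧ G.Adj b q) ∧ G.Adj c p ∧
        G.Adj d q := by
  have hv2 := h.whiteDegree_eq_two hv hpq hp hvp hq hvq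
  have hp2 := (h.whiteDegree_eq_of_adj hv hp hvp).symm.trans hv2
  have hq2 := (h.whiteDegree_eq_of_adj hv hq hvq).symm.trans hv2
  obtain ⟨p', hp'v, hp', hpp'⟩ := exists_white_ne hp2.ge v
  obtain ⟨q', hq'v, hq', hqq'⟩ := exists_white_ne hq2.ge v
  obtain ⟨a, ha, hav, hap⟩ := h.exists_cycleLink hv hp hvp hv2
  obtain ⟨b, hb, hbv, hbq⟩ := h.exists_cycleLink hv hq hvq hv2
  obtain ⟨c, hc, hcp, hcp'⟩ := h.exists_cycleLink hp hp' hpp' hp2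
  obtain ⟨d, hd, hdq, hdq'⟩ := h.exists_cycleLink hq hq' hqq' hq2
  have haS := (mem_cycleLinks.1 ha).1
  have hbS := (mem_cycleLinks.1 hb).1
  have hcS := (mem_cycleLinks.1 hc).1
  have haq : ¬ G.Adj a q := h.not_dominated_adj_white_path hp hv hq hpq hvp hvq hap hav haS
  have hbp : ¬ G.Adj b p := h.not_dominated_adj_white_path hq hv hp hpq.symm hvq hvp hbq hbv hbS
  have hap' : ¬ G.Adj a p' :=
    h.not_dominated_adj_white_path hv hp hp' hp'v.symm hvp.symm hpp' hav hap haS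
  have hbq' : ¬ G.Adj b q' :=
    h.not_dominated_adj_white_path hv hq hq' hq'v.symm hvq.symm hqq' hbv hbq hbS
  have hcd : c ≠ d := by
    rintro rfl
    exact h.not_adj_of_white_path hv hp hq hp' hq' hpq hvp hvq hpp' hqq' hcS hcp hcp' hdq hdq'
  exact ⟨a, ha, b, hb, c, hc, d, hd, by simp; grind, ⟨hav, hap⟩, ⟨hbv, hbq⟩, hcp, hdq⟩

lemma hasMove_of_two_le_whiteDegree (h : Exhausted G S₀) (hS : S₀ ⊆ S) (hv : v ∉ S)
    (hv2 : 2 ≤ whiteDegree G S v) : HasMove G (potential G (linkBase G S₀)) 27 S := by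
  obtain ⟨p, q, hpq, ⟨hp, hvp⟩, hq, hvq⟩ := exists_two_white hv2
  obtain ⟨a, ha, b, hb, c, hc, d, hd, hne, ⟨hav, hap⟩, ⟨hbv, hbq⟩, hcp, hdq⟩ :=
    h.exists_four_links (Finset.notMem_mono hS hv) hpq (Finset.notMem_mono hS hp) hvp
      (Finset.notMem_mono hS hq) hvq
  have hdom : ∀ {w}, w ∈ cycleLinks G S₀ → w ∈ S := fun hw => hS (mem_cycleLinks.1 hw).1
  have hlink : ∀ {w j}, w ∈ cycleLinks G S₀ →
      whiteDegree G (play G S v) w + j ≤ whiteDegree G S w →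
      weight G (linkBase G S₀) (play G S v) w + j ≤ weight G (linkBase G S₀) S w := fun hw =>
    weight_linkBase_add_le (h.linkBase_add_le_of_mem hw) hS subset_play (hdom hw)
  have hvT : v ∈ play G S v := self_mem_play
  have hpT : p ∈ play G S v := mem_play_of_adj hvp
  have hqT : q ∈ play G S v := mem_play_of_adj hvq
  refine h.hasMove_of_potential_add_thirtyNine_le hS (ssubset_play_self hv) <|
    potential_add_le subset_play [(v, 15), (p, 9), (q, 9), (a, 2), (b, 2), (c, 1), (d, 1)] ?_ ?_
  · have hne' : ∀ {x}, x ∉ S → x ≠ a ∧ x ≠ b ∧ x ≠ c ∧ x ≠ d := by grind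
    simpa [hvp.ne, hvq.ne, hpq, hne' hv, hne' hp, hne' hq] using hne
  · have hlow := h.mono hS
    simpa using ⟨weight_play_self_of_notMem hv,
      hlow.weight_add_nine_le subset_play (linkBase_le_five p) hp hpT hv hvT hvp.symm,
      hlow.weight_add_nine_le subset_play (linkBase_le_five q) hq hqT hv hvT hvq.symm,
      hlink ha (whiteDegree_add_two_le subset_play hvp.ne hv hvT hav hp hpT hap),
      hlink hb (whiteDegree_add_two_le subset_play hvq.ne hv hvT hbv hq hqT hbq),
      hlink hc (whiteDegree_succ_le subset_play hp hpT hcp),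
      hlink hd (whiteDegree_succ_le subset_play hq hqT hdq)⟩

end Exhausted

namespace Exhausted

variable {G : SimpleGraph V} {S₀ S : Finset V} {p v w : V}

lemma exists_three_links (h : Exhausted G S₀) (hv : v ∉ S₀) (hp : p ∉ S₀) (hvp : G.Adj v p)
    (hv2 : whiteDegree G S₀ v = 2) :
    ∃ p' ≠ v, p' ∉ S₀ ∧ G.Adj p p' ∧
      ∃ a ∈ cycleLinks G S₀, ∃ b ∈ cycleLinks G S₀, ∃ c ∈ cycleLinks G S₀,
        (a ≠ b ∧ a ≠ c ∧ b ≠ c) ∧ (G.Adj a v ∧ G.Adj a p) ∧ G.Adj b v ∧ G.Adj c p := by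
  have hp2 := (h.whiteDegree_eq_of_adj hv hp hvp).symm.trans hv2
  obtain ⟨v', hv'p, hv', hvv'⟩ := exists_white_ne hv2.ge p
  obtain ⟨p', hp'v, hp', hpp'⟩ := exists_white_ne hp2.ge v
  obtain ⟨a, ha, hav, hap⟩ := h.exists_cycleLink hv hp hvp hv2
  obtain ⟨b, hb, hbv, hbv'⟩ := h.exists_cycleLink hv hv' hvv' hv2
  obtain ⟨c, hc, hcp, hcp'⟩ := h.exists_cycleLink hp hp' hpp' hp2
  have haS := (mem_cycleLinks.1 ha).1
  have hbS := (mem_cycleLinks.1 hb).1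
  have hbp : ¬ G.Adj b p :=
    h.not_dominated_adj_white_path hv' hv hp hv'p hvv' hvp hbv' hbv hbS
  have hap' : ¬ G.Adj a p' :=
    h.not_dominated_adj_white_path hv hp hp' hp'v.symm hvp.symm hpp' hav hap haS
  exact ⟨p', hp'v, hp', hpp', a, ha, b, hb, c, hc, by grind, ⟨hav, hap⟩, hbv, hcp⟩

lemma hasMove_of_three_le_whiteDegree (h : Exhausted G S₀) (hS : S₀ ⊆ S)
    (hone : ∀ ⦃x⦄, x ∉ S → whiteDegree G S x ≤ 1) (hv : v ∉ S) (hp : p ∉ S) (hvp : G.Adj v p)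
    (hwv : G.Adj w v) (hwp : G.Adj w p) (hw3 : 3 ≤ whiteDegree G S w) :
    HasMove G (potential G (linkBase G S₀)) 27 S := by
  have := potential_play_add_fortyFive_le (four_le_linkBase (G := G) (S := S₀) w) hw3 hp hv hvp
    (hone hv) (hone hp) hwv hwp
  exact h.hasMove_of_potential_add_thirtyNine_le hS (ssubset_play_of_adj hv hwv) (by omega)

lemma hasMove_of_whiteDegree_eq_two (h : Exhausted G S₀) (hS : S₀ ⊆ S)
    (hone : ∀ ⦃x⦄, x ∉ S → whiteDegree G S x ≤ 1) (hv : v ∉ S) (hp : p ∉ S) (hvp : G.Adj v p)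
    (hv2 : whiteDegree G S₀ v = 2) : HasMove G (potential G (linkBase G S₀)) 27 S := by
  obtain ⟨p', hp'v, hp', hpp', a, ha, b, hb, c, hc, ⟨hab, hac, hbc⟩, ⟨hav, hap⟩, hbv, hcp⟩ :=
    h.exists_three_links (Finset.notMem_mono hS hv) (Finset.notMem_mono hS hp) hvp hv2
  rcases le_or_gt 3 (whiteDegree G S a) with ha3 | ha3
  · exact h.hasMove_of_three_le_whiteDegree hS hone hv hp hvp hav hap ha3
  have hp'S : p' ∈ S := by
    by_contra hp'S
    exact hp'v (eq_of_whiteDegree_le_one (hone hp) hp'S hpp' hv hvp.symm)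
  have hdom : ∀ {w}, w ∈ cycleLinks G S₀ → w ∈ S₀ := fun hw => (mem_cycleLinks.1 hw).1
  have ha2 : 2 ≤ whiteDegree G S a := two_le_whiteDegree hvp.ne hv hav hp hap
  have haT := whiteDegree_add_two_le (T := play G S v) subset_play hvp.ne hv self_mem_play hav hp
    (mem_play_of_adj hvp) hap
  have hvT : v ∈ play G S v := self_mem_play
  have hpT : p ∈ play G S v := mem_play_of_adj hvp
  refine h.hasMove_of_potential_add_thirtyNine_le hS (ssubset_play_self hv) <|
    potential_add_le subset_play [(v, 15), (p, 15), (a, 6), (b, 1), (c, 1), (p', 1)] ?_ ?_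
  · have hne : ∀ {x}, x ∉ S → x ≠ a ∧ x ≠ b ∧ x ≠ c ∧ x ≠ p' := by grind
    have hne' : ∀ {w}, w ∈ cycleLinks G S₀ → w ≠ p' := by grind
    simp [hvp.ne, hab, hac, hbc, hne hv, hne hp, hne' ha, hne' hb, hne' hc]
  · have := four_le_linkBase (G := G) (S := S₀) a
    simpa using ⟨weight_play_self_of_notMem hv,
      weight_add_fifteen_le_of_adj (hone hp) subset_play hp hpT hv hvT hvp.symm,
      weight_add_le_of_whiteDegree_eq_zero (subset_play (hS (hdom ha))) (by omega) (by omega)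
        (by omega) (by norm_num),
      weight_linkBase_add_le (h.linkBase_add_le_of_mem hb) hS subset_play (hS (hdom hb))
        (whiteDegree_succ_le subset_play hv hvT hbv),
      weight_linkBase_add_le (h.linkBase_add_le_of_mem hc) hS subset_play (hS (hdom hc))
        (whiteDegree_succ_le subset_play hp hpT hcp),
      weight_linkBase_add_le (h.linkBase_add_le_of_notMem hp') hS subset_play hp'S
        (whiteDegree_succ_le subset_play hp hpT hpp'.symm)⟩

end Exhausted

/-! ### White vertices forming a matching -/

/-- The edges between white vertices of the position `S ⊇ S₀` form a matching, and each of them was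
already isolated in the graph induced by the white vertices of `S₀`. -/
structure Matched (G : SimpleGraph V) (S₀ S : Finset V) : Prop where
  subset : S₀ ⊆ S
  whiteDegree_le_one : ∀ ⦃x⦄, x ∉ S → whiteDegree G S x ≤ 1
  whiteDegree_eq_one : ∀ ⦃x p⦄, x ∉ S → p ∉ S → G.Adj x p → whiteDegree G S₀ x = 1

namespace Matched

variable {G : SimpleGraph V} {S₀ S T : Finset V} {p u x y z : V}

lemma notMem (h : Matched G S₀ S) (hx : x ∉ S) : x ∉ S₀ :=
  Finset.notMem_mono h.subset hx

lemma mono (h : Matched G S₀ S) (hST : S ⊆ T) : Matched G S₀ T where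
  subset := h.subset.trans hST
  whiteDegree_le_one _ hx :=
    (whiteDegree_antitone hST).trans (h.whiteDegree_le_one (Finset.notMem_mono hST hx))
  whiteDegree_eq_one _ _ hx hp :=
    h.whiteDegree_eq_one (Finset.notMem_mono hST hx) (Finset.notMem_mono hST hp)

lemma weight_add_nine_le (h : Matched G S₀ S) (hST : S ⊆ T) (hx : x ∉ S) (hxT : x ∈ T) :
    weight G (linkBase G S₀) T x + 9 ≤ weight G (linkBase G S₀) S x :=
  DomGame.weight_add_nine_le hx hxT (linkBase_le_five x)
    ((whiteDegree_antitone hST).trans (h.whiteDegree_le_one hx))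

lemma eq_or_eq_of_mem_play (h : Matched G S₀ S) (hz : z ∉ S) (hy : y ∉ S) (hzy : G.Adj z y)
    (hx : x ∉ S) (hxT : x ∈ play G S z) : x = z ∨ x = y := by
  rcases mem_play.1 hxT with hxS | rfl | hzx
  exacts [absurd hxS hx, .inl rfl,
    .inr (eq_of_whiteDegree_le_one (h.whiteDegree_le_one hz) hx hzx hy hzy)]

lemma not_adj_of_mem_play (h : Matched G S₀ S) (hz : z ∉ S) (hy : y ∉ S) (hzy : G.Adj z y)
    (hx : x ∉ S) (hxT : x ∈ play G S z) (hu : u ∉ play G S z) : ¬ G.Adj x u := by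
  intro hxu
  rcases h.eq_or_eq_of_mem_play hz hy hzy hx hxT with rfl | rfl
  · exact hu (mem_play_of_adj hxu)
  · have huz := eq_of_whiteDegree_le_one (h.whiteDegree_le_one hy)
      (Finset.notMem_mono subset_play hu) hxu hz hzy.symm
    exact hu (huz ▸ self_mem_play)

lemma whiteDegree_eq_zero_of_notMem_play (h : Matched G S₀ S) (hz : z ∉ S) (hy : y ∉ S)
    (hzy : G.Adj z y) (hu : u ∉ play G S z) (hadj : ∀ x, G.Adj u x → x ∈ play G S z) :
    whiteDegree G S u = 0 := by
  refine whiteDegree_eq_zero_iff.2 fun x hux => ?_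
  by_contra hx
  exact h.not_adj_of_mem_play hz hy hzy hx (hadj x hux) hu hux.symm

lemma potential_reply_add_thirty_le (h : Matched G S₀ S) (hu : u ∉ S) (hp : p ∉ S)
    (hup : G.Adj u p) :
    potential G (linkBase G S₀) (play G S u) + 30 ≤ potential G (linkBase G S₀) S := by
  refine potential_add_le subset_play [(u, 15), (p, 15)] ?_ ?_
  · simp [hup.ne]
  · simpa using ⟨weight_play_self_of_notMem hu,
      weight_add_fifteen_le_of_adj (h.whiteDegree_le_one hp) subset_play hp (mem_play_of_adj hup)
        hu self_mem_play hup.symm⟩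

lemma potential_reply_add_twentyFour_le (h : Matched G S₀ S) (hu2 : 2 ≤ whiteDegree G S u) :
    potential G (linkBase G S₀) (play G S u) + 24 ≤ potential G (linkBase G S₀) S := by
  obtain ⟨a, b, hab, ⟨ha, hua⟩, hb, hub⟩ := exists_two_white hu2
  refine potential_add_le subset_play [(u, 6), (a, 9), (b, 9)] ?_ ?_
  · simp [hua.ne, hub.ne, hab]
  · simpa using ⟨weight_linkBase_play_self_add_le (by omega) (by omega) (by norm_num),
      h.weight_add_nine_le subset_play ha (mem_play_of_adj hua),
      h.weight_add_nine_le subset_play hb (mem_play_of_adj hub)⟩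

lemma potential_reply_add_twenty_le (hx : x ∉ S) (hux : G.Adj u x)
    (hx0 : whiteDegree G S x = 0) :
    potential G (linkBase G S₀) (play G S u) + 20 ≤ potential G (linkBase G S₀) S := by
  have hpos := one_le_whiteDegree hx hux
  have := whiteDegree_antitone (G := G) (x := x) (subset_play (G := G) (S := S) (v := u))
  refine potential_add_le subset_play [(u, 5), (x, 15)] ?_ ?_
  · simp [hux.ne]
  · simpa using ⟨weight_linkBase_play_self_add_le hpos (by omega) (by norm_num),
      weight_add_fifteen_le hx (mem_play_of_adj hux) (by omega)⟩

end Matched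

section Isolated

variable {G : SimpleGraph V} {S₀ S T : Finset V} {d : ℕ} {w x : V}

lemma weight_add_le_of_notMem_cycleLinks (hw : w ∉ cycleLinks G S₀) (hwT : w ∈ T)
    (hT : whiteDegree G T w = 0) (hpos : 1 ≤ whiteDegree G S w)
    (hd : d ≤ 5 + whiteDegree G S w) (hd7 : d ≤ 7) :
    weight G (linkBase G S₀) T w + d ≤ weight G (linkBase G S₀) S w :=
  weight_add_le_of_whiteDegree_eq_zero hwT hT hpos (by rwa [linkBase, if_neg hw]) hd7

lemma weight_add_one_le_of_whiteDegree_le_two (hw2 : whiteDegree G S w ≤ 2) (hST : S ⊆ T)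
    (hw : w ∈ S) (hx : x ∉ S) (hxT : x ∈ T) (hwx : G.Adj w x) :
    weight G (linkBase G S₀) T w + 1 ≤ weight G (linkBase G S₀) S w := by
  have hj := whiteDegree_succ_le hST hx hxT hwx
  have := linkBase_le_five (G := G) (S := S₀) w
  exact weight_add_le_of_whiteDegree_add_le hw hST hj (by omega)

lemma Exhausted.exists_two_notMem_cycleLinks (h : Exhausted G S₀) (hS : S₀ ⊆ S) (hx : x ∉ S)
    (hx0 : whiteDegree G S x = 0) :
    ∃ a b, a ≠ b ∧ (a ∈ S ∧ a ∉ cycleLinks G S₀ ∧ G.Adj a x) ∧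
      b ∈ S ∧ b ∉ cycleLinks G S₀ ∧ G.Adj b x := by
  have hxS₀ := Finset.notMem_mono hS hx
  have hadj := whiteDegree_eq_zero_iff.1 hx0
  have := h.whiteDegree_le_two hxS₀
  obtain h0 | h1 | h2 : whiteDegree G S₀ x = 0 ∨ whiteDegree G S₀ x = 1 ∨
    2 ≤ whiteDegree G S₀ x := by omega
  · obtain ⟨a, hxa⟩ := h.exists_adj x
    obtain ⟨b, hbx, hba⟩ := h.edgesInTriangles hxa
    exact ⟨a, b, hba.ne.symm,
      ⟨hadj a hxa, h.notMem_cycleLinks_of_adj_isolated hxS₀ h0 hxa.symm, hxa.symm⟩,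
      hadj b hbx.symm, h.notMem_cycleLinks_of_adj_isolated hxS₀ h0 hbx, hbx⟩
  · obtain ⟨p, hp, hxp⟩ := exists_white_of_one_le h1.ge
    obtain ⟨w, hw, hwL, -, hwx, hwp⟩ := h.exists_notMem_cycleLinks hxS₀ hp hxp h1
    exact ⟨p, w, hwp.ne.symm, ⟨hadj p hxp, notMem_cycleLinks hp, hxp.symm⟩, hS hw, hwL, hwx⟩
  · obtain ⟨p, q, hpq, ⟨hp, hxp⟩, hq, hxq⟩ := exists_two_white h2
    exact ⟨p, q, hpq, ⟨hadj p hxp, notMem_cycleLinks hp, hxp.symm⟩, hadj q hxq,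
      notMem_cycleLinks hq, hxq.symm⟩

lemma Exhausted.exists_ne_notMem_cycleLinks (h : Exhausted G S₀) (hS : S₀ ⊆ S) (hx : x ∉ S)
    (hx0 : whiteDegree G S x = 0) (w : V) :
    ∃ a ≠ w, a ∈ S ∧ a ∉ cycleLinks G S₀ ∧ G.Adj a x := by
  obtain ⟨a, b, hab, ha, hb⟩ := h.exists_two_notMem_cycleLinks hS hx hx0
  rcases eq_or_ne a w with rfl | haw
  exacts [⟨b, hab.symm, hb⟩, ⟨a, haw, ha⟩]

end Isolated

namespace Exhausted

variable {G : SimpleGraph V} {S₀ S T : Finset V} {d : ℕ} {p u w x y z : V}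

lemma exists_weight_play_add_seven_le (h : Exhausted G S₀) (hM : Matched G S₀ S) (hz : z ∉ S)
    (hy : y ∉ S) (hzy : G.Adj z y) :
    ∃ w ∈ S, whiteDegree G S₀ w ≤ 2 ∧ G.Adj w z ∧ G.Adj w y ∧
      weight G (linkBase G S₀) (play G S z) w + 7 ≤ weight G (linkBase G S₀) S w := by
  obtain ⟨w, hw, hwL, hw2, hwz, hwy⟩ := h.exists_notMem_cycleLinks (hM.notMem hz) (hM.notMem hy)
    hzy (hM.whiteDegree_eq_one hz hy hzy)
  have hwT := whiteDegree_add_two_le (T := play G S z) subset_play hzy.ne hz self_mem_play hwz hy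
    (mem_play_of_adj hzy) hwy
  have := whiteDegree_antitone (G := G) (x := w) hM.subset
  exact ⟨w, hM.subset hw, hw2, hwz, hwy, weight_add_le_of_notMem_cycleLinks hwL
    (subset_play (hM.subset hw)) (by omega) (by omega) (by omega) le_rfl⟩

lemma potential_play_add_thirtySeven_le (h : Exhausted G S₀) (hM : Matched G S₀ S) (hz : z ∉ S)
    (hy : y ∉ S) (hzy : G.Adj z y) :
    potential G (linkBase G S₀) (play G S z) + 37 ≤ potential G (linkBase G S₀) S := by
  obtain ⟨w, -, -, hwz, hwy, hw7⟩ := h.exists_weight_play_add_seven_le hM hz hy hzy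
  refine potential_add_le subset_play [(z, 15), (y, 15), (w, 7)] ?_ ?_
  · simp [hzy.ne, hwz.ne.symm, hwy.ne.symm]
  · simpa using ⟨weight_play_self_of_notMem hz,
      weight_add_fifteen_le_of_adj (hM.whiteDegree_le_one hy) subset_play hy (mem_play_of_adj hzy)
        hz self_mem_play hzy.symm, hw7⟩

lemma potential_play_add_thirtySeven_add_le (h : Exhausted G S₀) (hM : Matched G S₀ S) (hz : z ∉ S)
    (hy : y ∉ S) (hzy : G.Adj z y) (hu : u ∈ S)
    (hu2 : ¬ (whiteDegree G S₀ u ≤ 2 ∧ G.Adj u z ∧ G.Adj u y))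
    (hd : weight G (linkBase G S₀) (play G S z) u + d ≤ weight G (linkBase G S₀) S u) :
    potential G (linkBase G S₀) (play G S z) + (37 + d) ≤ potential G (linkBase G S₀) S := by
  obtain ⟨w, hw, hw2, hwz, hwy, hw7⟩ := h.exists_weight_play_add_seven_le hM hz hy hzy
  have hwu : w ≠ u := by
    rintro rfl
    exact hu2 ⟨hw2, hwz, hwy⟩
  have hne : ∀ {x}, x ∉ S → x ≠ w ∧ x ≠ u := by grind
  have hdrop := potential_add_le (G := G) (b := linkBase G S₀) (T := play G S z) subset_play
    [(z, 15), (y, 15), (w, 7), (u, d)] (by simp [hzy.ne, hwu, hne hz, hne hy]) <| by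
    simpa using ⟨weight_play_self_of_notMem hz,
      weight_add_fifteen_le_of_adj (hM.whiteDegree_le_one hy) subset_play hy (mem_play_of_adj hzy)
        hz self_mem_play hzy.symm, hw7, hd⟩
  simpa [← add_assoc] using hdrop

lemma hasMove_of_whiteDegree_eq_one (h : Exhausted G S₀) (hM : Matched G S₀ S) (hz : z ∉ S)
    (hy : y ∉ S) (hzy : G.Adj z y) (hw : w ∈ S) (hw1 : whiteDegree G S w = 1) (hwz : G.Adj w z) :
    HasMove G (potential G (linkBase G S₀)) 27 S := by
  have hwT := whiteDegree_succ_le (T := play G S z) subset_play hz self_mem_play hwz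
  have := four_le_linkBase (G := G) (S := S₀) w
  have hdrop := h.potential_play_add_thirtySeven_add_le (d := 5) hM hz hy hzy hw
    (fun ⟨_, _, hwy⟩ => hzy.ne (eq_of_whiteDegree_le_one hw1.le hz hwz hy hwy))
    (weight_add_le_of_whiteDegree_eq_zero (subset_play hw) (by omega) (by omega) (by omega)
      (by norm_num))
  exact h.hasMove_of_potential_add_thirtyNine_le hM.subset (ssubset_play_self hz) (by omega)

lemma two_le_whiteDegree_of_not_hasMove (h : Exhausted G S₀) (hM : Matched G S₀ S)
    (hmove : ¬ HasMove G (potential G (linkBase G S₀)) 27 S) (hz : z ∉ S) (hy : y ∉ S)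
    (hzy : G.Adj z y) (hw : w ∈ S) (hwz : G.Adj w z) : 2 ≤ whiteDegree G S w := by
  have hpos := one_le_whiteDegree hz hwz
  by_contra hw2
  exact hmove (h.hasMove_of_whiteDegree_eq_one hM hz hy hzy hw (by omega) hwz)

lemma hasMove_of_adj_isolated (h : Exhausted G S₀) (hM : Matched G S₀ S) (hx : x ∉ S)
    (hx0 : whiteDegree G S x = 0) (hwx : G.Adj w x) (hw3 : 3 ≤ whiteDegree G S w) :
    HasMove G (potential G (linkBase G S₀)) 27 S := by
  obtain ⟨a, hax, ha, hwa⟩ := exists_white_ne ((Nat.le_succ 2).trans hw3) x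
  obtain ⟨b, hbx, hba, hb, hwb⟩ := exists_white_ne_ne hw3 x a
  have := whiteDegree_antitone (G := G) (x := x) (subset_play (G := G) (S := S) (v := w))
  suffices hdrop : potential G (linkBase G S₀) (play G S w) + 40 ≤
      potential G (linkBase G S₀) S from
    h.hasMove_of_potential_add_thirtyNine_le hM.subset (ssubset_play_of_adj hx hwx) (by omega)
  refine potential_add_le subset_play [(w, 7), (x, 15), (a, 9), (b, 9)] ?_ ?_
  · simp [hwx.ne, hwa.ne, hwb.ne, hax.symm, hbx.symm, hba.symm]
  · simpa using ⟨weight_linkBase_play_self_add_le (by omega) (by omega) le_rfl,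
      weight_add_fifteen_le hx (mem_play_of_adj hwx) (by omega),
      hM.weight_add_nine_le subset_play ha (mem_play_of_adj hwa),
      hM.weight_add_nine_le subset_play hb (mem_play_of_adj hwb)⟩

lemma potential_reply_add_seventeen_le (h : Exhausted G S₀) (hM : Matched G S₀ S) (hST : S ⊆ T)
    (hlow : ∀ ⦃w⦄, w ∈ S → G.Adj w u → whiteDegree G S w ≤ 2) (hu : u ∉ T)
    (hu0 : whiteDegree G S u = 0) :
    potential G (linkBase G S₀) (play G T u) + 17 ≤ potential G (linkBase G S₀) T := by
  have huS := Finset.notMem_mono hST hu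
  obtain ⟨a, b, hab, ⟨ha, -, hau⟩, hb, -, hbu⟩ :=
    h.exists_two_notMem_cycleLinks hM.subset huS hu0
  have hone : ∀ {w}, w ∈ S → G.Adj w u →
      weight G (linkBase G S₀) (play G T u) w + 1 ≤ weight G (linkBase G S₀) T w :=
    fun hw hwu => weight_add_one_le_of_whiteDegree_le_two
      ((whiteDegree_antitone hST).trans (hlow hw hwu)) subset_play (hST hw) hu self_mem_play hwu
  refine potential_add_le subset_play [(u, 15), (a, 1), (b, 1)] ?_ ?_
  · simp [hau.ne.symm, hbu.ne.symm, hab]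
  · simpa using ⟨weight_play_self_of_notMem hu, hone ha hau, hone hb hbu⟩

lemma potential_reply_add_sixteen_le (h : Exhausted G S₀) (hM : Matched G S₀ S) (hu : u ∈ S)
    (huL : u ∉ cycleLinks G S₀) (hu1 : whiteDegree G S u ≤ 1) (hx : x ∉ S) (hux : G.Adj u x)
    (hp : p ∉ S) (hxp : G.Adj x p) :
    potential G (linkBase G S₀) (play G S u) + 16 ≤ potential G (linkBase G S₀) S := by
  obtain ⟨w, -, huw, hxw, -, -, hw1⟩ :=
    h.exists_weight_add_one_le_of_unique_white hM.subset hu1 hx hux hp hxp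
  have hpos := one_le_whiteDegree hx hux
  refine potential_add_le subset_play [(u, 6), (x, 9), (w, 1)] ?_ ?_
  · simp [hux.ne, huw, hxw]
  · simpa using ⟨weight_add_le_of_notMem_cycleLinks huL (subset_play hu) whiteDegree_play_self hpos
      (by omega) (by norm_num), hM.weight_add_nine_le subset_play hx (mem_play_of_adj hux), hw1⟩

lemma potential_play_play_add_fiftyFour_le (h : Exhausted G S₀) (hM : Matched G S₀ S) (hz : z ∉ S)
    (hy : y ∉ S) (hzy : G.Adj z y) (hu : u ∈ play G S z) (huS2 : u ∈ S → 2 ≤ whiteDegree G S u)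
    (hu1 : whiteDegree G (play G S z) u ≤ 1) (hx : x ∉ play G S z) (hux : G.Adj u x)
    (hp : p ∉ play G S z) (hxp : G.Adj x p) :
    potential G (linkBase G S₀) (play G (play G S z) u) + 54 ≤ potential G (linkBase G S₀) S := by
  have hxS : x ∉ S := Finset.notMem_mono subset_play hx
  have huS : u ∈ S := by
    by_contra huS
    exact hM.not_adj_of_mem_play hz hy hzy huS hu hx hux
  obtain ⟨x', hx'x, hx'S, hux'⟩ := exists_white_ne (huS2 huS) x
  have hx'T : x' ∈ play G S z := by
    by_contra hx'T
    exact hx'x (eq_of_whiteDegree_le_one hu1 hx'T hux' hx hux)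
  have hx'1 : whiteDegree G S₀ x' = 1 := by
    rcases hM.eq_or_eq_of_mem_play hz hy hzy hx'S hx'T with rfl | rfl
    exacts [hM.whiteDegree_eq_one hz hy hzy, hM.whiteDegree_eq_one hy hz hzy.symm]
  have huL : u ∉ cycleLinks G S₀ :=
    h.notMem_cycleLinks_of_adj hx'x.symm (hM.notMem hxS) hux
      (hM.whiteDegree_eq_one hxS (Finset.notMem_mono subset_play hp) hxp) (hM.notMem hx'S) hux' hx'1
  have hfirst := h.potential_play_add_thirtySeven_add_le (d := 1) hM hz hy hzy huS ?_ ?_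
  · have hreply := h.potential_reply_add_sixteen_le (hM.mono subset_play) hu huL hu1 hx hux hp hxp
    omega
  · rintro ⟨hu2, huz, huy⟩
    have hxz : x ≠ z := fun hxz => hx (hxz ▸ self_mem_play)
    have hxy : x ≠ y := fun hxy => hx (hxy ▸ mem_play_of_adj hzy)
    have := three_le_whiteDegree hxz hxy hzy.ne (hM.notMem hxS) hux (hM.notMem hz) huz
      (hM.notMem hy) huy
    omega
  · have := huS2 huS
    have := linkBase_le_five (G := G) (S := S₀) u
    exact weight_add_le_of_whiteDegree_add_le huS subset_play (by omega) (by omega)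

lemma hasMove_of_white_adj (h : Exhausted G S₀) (hM : Matched G S₀ S) (hz : z ∉ S) (hy : y ∉ S)
    (hzy : G.Adj z y) : HasMove G (potential G (linkBase G S₀)) 27 S := by
  by_contra hmove
  have hfirst := h.potential_play_add_thirtySeven_le hM hz hy hzy
  refine hmove ⟨z, ssubset_play_self hz, by omega, fun u hu => ?_⟩
  have hMT := hM.mono (subset_play (G := G) (v := z))
  by_cases huT : u ∈ play G S z
  · obtain ⟨x, hx, hux⟩ := exists_adj_of_ssubset_play hu huT
    rcases le_or_gt 2 (whiteDegree G (play G S z) u) with hu2 | hu1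
    · have := hMT.potential_reply_add_twentyFour_le hu2
      omega
    by_cases hx0 : whiteDegree G (play G S z) x = 0
    · have := Matched.potential_reply_add_twenty_le (S₀ := S₀) hx hux hx0
      omega
    · obtain ⟨p, hp, hxp⟩ := exists_white_of_one_le (Nat.one_le_iff_ne_zero.2 hx0)
      exact h.potential_play_play_add_fiftyFour_le hM hz hy hzy huT
        (fun huS => h.two_le_whiteDegree_of_not_hasMove hM hmove (Finset.notMem_mono subset_play hx)
          (Finset.notMem_mono subset_play hp) hxp huS hux) (by omega) hx hux hp hxp
  by_cases hu0 : ∀ x, G.Adj u x → x ∈ play G S z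
  · have huS := Finset.notMem_mono subset_play huT
    have huS0 := hM.whiteDegree_eq_zero_of_notMem_play hz hy hzy huT hu0
    have := h.potential_reply_add_seventeen_le (u := u) hM subset_play (fun w _ hwu => by
      by_contra! hw3
      exact hmove (h.hasMove_of_adj_isolated hM huS huS0 hwu hw3)) huT huS0
    omega
  · push Not at hu0
    obtain ⟨p, hup, hp⟩ := hu0
    have := hMT.potential_reply_add_thirty_le huT hp hup
    omega

end Exhausted

namespace Exhausted

variable {G : SimpleGraph V} {S₀ S T : Finset V} {w x : V}

lemma hasMove_of_notMem_cycleLinks (h : Exhausted G S₀) (hS : S₀ ⊆ S)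
    (h0 : ∀ ⦃x⦄, x ∉ S → whiteDegree G S x = 0) (hle : ∀ w, whiteDegree G S w ≤ 2)
    (hwL : w ∉ cycleLinks G S₀) (hw2 : 2 ≤ whiteDegree G S w) :
    HasMove G (potential G (linkBase G S₀)) 27 S := by
  obtain ⟨x, y, hxy, ⟨hx, hwx⟩, hy, hwy⟩ := exists_two_white hw2
  obtain ⟨a, haw, haS, haL, hax⟩ := h.exists_ne_notMem_cycleLinks hS hx (h0 hx) w
  obtain ⟨b, hbw, hbS, -, hby⟩ := h.exists_ne_notMem_cycleLinks hS hy (h0 hy) w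
  have hST : S ⊆ play G S w := subset_play
  have hxT : x ∈ play G S w := mem_play_of_adj hwx
  have hyT : y ∈ play G S w := mem_play_of_adj hwy
  have hdw : weight G (linkBase G S₀) (play G S w) w + 7 ≤ weight G (linkBase G S₀) S w :=
    weight_add_le_of_notMem_cycleLinks hwL self_mem_play whiteDegree_play_self (by omega) (by omega)
      le_rfl
  have hwhite : ∀ {z}, z ∉ S → z ∈ play G S w →
      weight G (linkBase G S₀) (play G S w) z + 15 ≤ weight G (linkBase G S₀) S z :=
    fun hz hzT => weight_add_fifteen_le hz hzT <|
      Nat.eq_zero_of_le_zero ((whiteDegree_antitone hST).trans (h0 hz).le)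
  suffices hdrop : potential G (linkBase G S₀) (play G S w) + 39 ≤
      potential G (linkBase G S₀) S from
    h.hasMove_of_potential_add_thirtyNine_le hS (ssubset_play_of_adj hx hwx) hdrop
  rcases eq_or_ne a b with rfl | hab
  · have haT := whiteDegree_add_two_le hST hxy hx hxT hax hy hyT hby
    have := hle a
    suffices hdrop : potential G (linkBase G S₀) (play G S w) + 44 ≤
        potential G (linkBase G S₀) S by omega
    refine potential_add_le hST [(w, 7), (x, 15), (y, 15), (a, 7)] ?_ ?_
    · simp [hwx.ne, hwy.ne, hxy, haw.symm, hax.ne.symm, hby.ne.symm]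
    · simpa using ⟨hdw, hwhite hx hxT, hwhite hy hyT, weight_add_le_of_notMem_cycleLinks haL
        (hST haS) (by omega) (by omega) (by omega) le_rfl⟩
  · refine potential_add_le hST [(w, 7), (x, 15), (y, 15), (a, 1), (b, 1)] ?_ ?_
    · have hne : ∀ {z}, z ∉ S → z ≠ a ∧ z ≠ b := by grind
      simp [hwx.ne, hwy.ne, hxy, haw.symm, hbw.symm, hab, hne hx, hne hy]
    · simpa using ⟨hdw, hwhite hx hxT, hwhite hy hyT,
        weight_add_one_le_of_whiteDegree_le_two (hle a) hST haS hx hxT hax,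
        weight_add_one_le_of_whiteDegree_le_two (hle b) hST hbS hy hyT hby⟩

lemma potential_add_twentySeven_le (h : Exhausted G S₀) (hS : S₀ ⊆ S)
    (hle : ∀ w ∉ cycleLinks G S₀, whiteDegree G S w ≤ 1) (hST : S ⊆ T) (hx : x ∉ S)
    (hxT : x ∈ T) (hx0 : whiteDegree G S x = 0) :
    potential G (linkBase G S₀) T + 27 ≤ potential G (linkBase G S₀) S := by
  obtain ⟨a, b, hab, ⟨ha, haL, hax⟩, hb, hbL, hbx⟩ := h.exists_two_notMem_cycleLinks hS hx hx0
  have hlink : ∀ {w}, w ∈ S → w ∉ cycleLinks G S₀ → G.Adj w x →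
      weight G (linkBase G S₀) T w + 6 ≤ weight G (linkBase G S₀) S w := fun {w} hw hwL hwx => by
    have hwT := whiteDegree_succ_le hST hx hxT hwx
    have := hle w hwL
    exact weight_add_le_of_notMem_cycleLinks hwL (hST hw) (by omega) (by omega) (by omega)
      (by norm_num)
  refine potential_add_le hST [(x, 15), (a, 6), (b, 6)] ?_ ?_
  · simp [hax.ne.symm, hbx.ne.symm, hab]
  · simpa using ⟨weight_add_fifteen_le hx hxT
      (Nat.eq_zero_of_le_zero ((whiteDegree_antitone hST).trans hx0.le)), hlink ha haL hax,
      hlink hb hbL hbx⟩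

lemma hasMove_of_whiteDegree_le_one (h : Exhausted G S₀) (hS : S₀ ⊆ S)
    (h0 : ∀ ⦃x⦄, x ∉ S → whiteDegree G S x = 0)
    (hle : ∀ w ∉ cycleLinks G S₀, whiteDegree G S w ≤ 1) (hx : x ∉ S) :
    HasMove G (potential G (linkBase G S₀)) 27 S := by
  have hfirst := h.potential_add_twentySeven_le hS hle (subset_play (G := G)) hx self_mem_play
    (h0 hx)
  refine ⟨x, ssubset_play_self hx, hfirst, fun u hu => ?_⟩
  obtain ⟨y, hyU, hy⟩ := Finset.exists_of_ssubset hu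
  have hS' := subset_play (G := G) (S := S) (v := x)
  have hreply := h.potential_add_twentySeven_le (hS.trans hS')
    (fun w hwL => (whiteDegree_antitone hS').trans (hle w hwL)) hu.le hy hyU
    (Nat.eq_zero_of_le_zero ((whiteDegree_antitone hS').trans (h0 (fun hyS => hy (hS' hyS))).le))
  omega

lemma hasMove_of_forall_not_white_adj (h : Exhausted G S₀) (hM : Matched G S₀ S)
    (h0 : ∀ ⦃x⦄, x ∉ S → whiteDegree G S x = 0) (hx : x ∉ S) :
    HasMove G (potential G (linkBase G S₀)) 27 S := by
  by_contra hmove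
  have hle : ∀ w, whiteDegree G S w ≤ 2 := fun w => by
    by_contra! hw3
    obtain ⟨y, hy, hwy⟩ := exists_white_of_one_le ((Nat.le_add_left 1 2).trans hw3)
    exact hmove (h.hasMove_of_adj_isolated hM hy (h0 hy) hwy hw3)
  refine hmove (h.hasMove_of_whiteDegree_le_one hM.subset h0 (fun w hwL => ?_) hx)
  by_contra! hw2
  exact hmove (h.hasMove_of_notMem_cycleLinks hM.subset h0 hle hwL hw2)

theorem hasMove (h : Exhausted G S₀) (hS : S₀ ⊆ S) (hne : S ≠ Finset.univ) :
    HasMove G (potential G (linkBase G S₀)) 27 S := by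
  by_contra hmove
  have hone : ∀ ⦃x⦄, x ∉ S → whiteDegree G S x ≤ 1 := fun x hx => by
    by_contra! hx2
    exact hmove (h.hasMove_of_two_le_whiteDegree hS hx hx2)
  have hM : Matched G S₀ S := ⟨hS, hone, fun x p hx hp hxp => by
    have := h.whiteDegree_le_two (Finset.notMem_mono hS hx)
    have := one_le_whiteDegree (Finset.notMem_mono hS hp) hxp
    have : whiteDegree G S₀ x ≠ 2 := fun hx2 =>
      hmove (h.hasMove_of_whiteDegree_eq_two hS hone hx hp hxp hx2)
    omega⟩
  have h0 : ∀ ⦃x⦄, x ∉ S → whiteDegree G S x = 0 := fun x hx =>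
    whiteDegree_eq_zero_iff.2 fun u hxu => by
      by_contra hu
      exact hmove (h.hasMove_of_white_adj hM hx hu hxu)
  obtain ⟨x, hx⟩ : ∃ x, x ∉ S := by simpa [Finset.eq_univ_iff_forall] using hne
  exact hmove (h.hasMove_of_forall_not_white_adj hM h0 hx)

end Exhausted

/-! ### Base 6 and the final count -/

lemma hasMove_of_potential_add_thirtyNine_le {G : SimpleGraph V} {S : Finset V} {v : V}
    (hv : S ⊂ play G S v) (hd : potential G 6 (play G S v) + 39 ≤ potential G 6 S) :
    HasMove G (potential G 6) 27 S :=
  HasMove.of_le_drop (fun _ _ _ hu => potential_reply_add_le (fun _ => le_rfl) le_rfl hu) hv hd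
    (by norm_num) (by norm_num)

lemma lowDegree_of_not_hasMove {G : SimpleGraph V} {S : Finset V}
    (h : ¬ HasMove G (potential G 6) 27 S) : LowDegree G S := by
  refine ⟨fun x hx => ?_, fun x => ?_⟩ <;> by_contra! hdeg
  · have := potential_play_add_le (weight_play_self_of_notMem (G := G) (b := 6) hx)
    exact h (hasMove_of_potential_add_thirtyNine_le (ssubset_play_self hx) (by omega))
  · obtain ⟨a, ha, hxa⟩ := exists_white_of_one_le ((Nat.le_add_left 1 3).trans hdeg)
    have hdx : weight G 6 (play G S x) x + 7 ≤ weight G 6 S x :=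
      weight_add_le_of_whiteDegree_eq_zero self_mem_play whiteDegree_play_self (by omega)
        (by simp only [Pi.ofNat_apply]; omega) le_rfl
    have := potential_play_add_le hdx
    exact h (hasMove_of_potential_add_thirtyNine_le (ssubset_play_of_adj ha hxa) (by omega))

section Phases

variable {H : Finset (Finset V)} {S : Finset V}

lemma mul_domGameVal_le_potential_linkBase {S₀ : Finset V} (h : Exhausted (adjGraph H) S₀) :
    27 * domGameVal H true S₀ ≤ potential (adjGraph H) (linkBase (adjGraph H) S₀) S₀ :=
  mul_domGameVal_le_of_hasMove (P := (S₀ ⊆ ·)) (fun _ _ hST hS => hS.trans hST)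
    (fun _ hS hne => .inr (h.hasMove hS hne)) S₀ subset_rfl

lemma mul_domGameVal_le_potential_five (htri : EdgesInTriangles (adjGraph H))
    (hadj : ∀ v, ∃ u, (adjGraph H).Adj v u) (h : LowDegree (adjGraph H) S) :
    27 * domGameVal H true S ≤ potential (adjGraph H) 5 S := by
  refine mul_domGameVal_le_of_hasMove (fun _ _ hST hS => LowDegree.mono hS hST)
    (fun T hT _ => ?_) S h
  refine or_iff_not_imp_right.2 fun hmove => ?_
  have hexh : Exhausted (adjGraph H) T := ⟨hT, htri, hadj, hmove⟩
  exact (mul_domGameVal_le_potential_linkBase hexh).trans (potential_mono_base linkBase_le_five)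

lemma mul_domGameVal_le_potential_six (htri : EdgesInTriangles (adjGraph H))
    (hadj : ∀ v, ∃ u, (adjGraph H).Adj v u) (S : Finset V) :
    27 * domGameVal H true S ≤ potential (adjGraph H) 6 S := by
  refine mul_domGameVal_le_of_hasMove (P := fun _ => True) (fun _ _ _ => id)
    (fun T _ _ => ?_) S trivial
  refine or_iff_not_imp_right.2 fun hmove => ?_
  exact (mul_domGameVal_le_potential_five htri hadj (lowDegree_of_not_hasMove hmove)).trans
    (potential_mono_base fun _ => Nat.le_succ 5)

end Phases

end DomGame

theorem stmt_9_general (V : Type) [Fintype V] (H : Finset (Finset V))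
    (htri : DomGame.EdgesInTriangles (DomGame.adjGraph H))
    (hisol : ∀ v : V, ∃ u : V, u ≠ v ∧ ∃ e ∈ H, u ∈ e ∧ v ∈ e) :
    (gammaGame H : ℝ) ≤ 5 / 9 * Fintype.card V := by
  have hadj : ∀ v, ∃ u, (DomGame.adjGraph H).Adj v u := fun v =>
    (hisol v).imp fun _ => SimpleGraph.Adj.symm
  have hbound := DomGame.mul_domGameVal_le_potential_six htri hadj ∅
  rw [DomGame.potential_empty] at hbound
  have hreal : (27 * gammaGame H : ℝ) ≤ 15 * Fintype.card V := by exact_mod_cast hbound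
  linarith

/-- if `H` is a 3-uniform hypergraph on `n` vertices with no isolated
vertices, then `γ_g(H) ≤ (5/9) n`. -/
theorem stmt_9 (V : Type) [Fintype V] (H : Finset (Finset V))
    (huniform : ∀ e ∈ H, e.card = 3)
    (hisol : ∀ v : V, ∃ u : V, u ≠ v ∧ ∃ e ∈ H, u ∈ e ∧ v ∈ e) :
    (gammaGame H : ℝ) ≤ 5 / 9 * Fintype.card V :=
  stmt_9_general V H (DomGame.edgesInTriangles_adjGraph fun e he => (huniform e he).ge) hisol
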